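/- Approximation guarantee of greedy with approximate marginal gains: assume α_{j,max} > 0 for every j ∈ {1,…,m}, and set α = min_{j ∈ {1,…,m}} α_{j,min}/α_{j,max}. Let P₀ = ∅ and, for each i = 0, 1, …, k−1, let P_{i+1} = P_i ∪ {x_i*}, where γ_{P_i} ∈ Γ_≤(1_{P_i},(k/n)𝟙) is any coupling attaining f(P_i) and x_i* is any element of {1,…,m} \ P_i maximizing the approximate marginal gain f̂(x ∣ P_i) over x ∈ {1,…,m} \ P_i. Then the set P̂ = P_k satisfies |P̂| = k and f(P̂) = h(P̂) ≥ (1 − e^{−α}) · max{f(P) : P ⊆ {1,…,m}, |P| ≤ k}. -/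

import Mathlib

open Finset

noncomputable section

/-- Frobenius inner product `⟨S, γ⟩ = Σ_{i,j} S_{ij} γ_{ij}`. -/
def dotS {m n : ℕ} (S γ : Fin m → Fin n → ℝ) : ℝ := ∑ i, ∑ j, S i j * γ i j

/-- Transport polytope with equality marginals. -/
def Gamma {m n : ℕ} (μ : Fin m → ℝ) (ν : Fin n → ℝ) : Set (Fin m → Fin n → ℝ) :=
  {γ | (∀ i j, 0 ≤ γ i j) ∧ (∀ i, ∑ j, γ i j = μ i) ∧ (∀ j, ∑ i, γ i j = ν j)}

/-- Semi-relaxed transport polytope: target marginal constraint is `≤`. -/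
def GammaLe {m n : ℕ} (μ : Fin m → ℝ) (ν : Fin n → ℝ) : Set (Fin m → Fin n → ℝ) :=
  {γ | (∀ i j, 0 ≤ γ i j) ∧ (∀ i, ∑ j, γ i j = μ i) ∧ (∀ j, ∑ i, γ i j ≤ ν j)}

/-- Indicator vector of a subset `P ⊆ {1,…,m}`. -/
def indVec {m : ℕ} (P : Finset (Fin m)) : Fin m → ℝ := fun i => if i ∈ P then 1 else 0

/-- `h(P) = max_{γ ∈ Γ(1_P, (|P|/n)𝟙)} ⟨S, γ⟩`. -/
def hval {m n : ℕ} (S : Fin m → Fin n → ℝ) (P : Finset (Fin m)) : ℝ :=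
  sSup (dotS S '' Gamma (indVec P) (fun _ => (P.card : ℝ) / (n : ℝ)))

/-- `f(P) = max_{γ ∈ Γ_≤(1_P, (k/n)𝟙)} ⟨S, γ⟩`. -/
def fval {m n : ℕ} (k : ℕ) (S : Fin m → Fin n → ℝ) (P : Finset (Fin m)) : ℝ :=
  sSup (dotS S '' GammaLe (indVec P) (fun _ => (k : ℝ) / (n : ℝ)))

/-- Sum of the `t` largest entries of `s`, as the maximum of `∑_{i ∈ T} s i`
over subsets `T` of cardinality `t`. -/
def topSum {n : ℕ} (t : ℕ) (s : Fin n → ℝ) : ℝ :=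
  sSup {x : ℝ | ∃ T : Finset (Fin n), T.card = t ∧ x = ∑ i ∈ T, s i}

/-- Sum of the `t` smallest entries of `s`, as the minimum of `∑_{i ∈ T} s i`
over subsets `T` of cardinality `t`. -/
def botSum {n : ℕ} (t : ℕ) (s : Fin n → ℝ) : ℝ :=
  sInf {x : ℝ | ∃ T : Finset (Fin n), T.card = t ∧ x = ∑ i ∈ T, s i}

/-- `α_{j,max} = (1/⌊n/k⌋)·(sum of the ⌊n/k⌋ largest entries of row j of S)`. -/
def alphaMax {m n : ℕ} (k : ℕ) (S : Fin m → Fin n → ℝ) (j : Fin m) : ℝ :=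
  (1 / ((n / k : ℕ) : ℝ)) * topSum (n / k) (S j)

/-- `α_{j,min} = (1/⌊n/k⌋)·(sum of the ⌊n/k⌋ smallest entries of row j of S)`. -/
def alphaMin {m n : ℕ} (k : ℕ) (S : Fin m → Fin n → ℝ) (j : Fin m) : ℝ :=
  (1 / ((n / k : ℕ) : ℝ)) * botSum (n / k) (S j)

/-- Approximate marginal gain
`f̂(x_j ∣ P) = max{⟨S(j,·), v⟩ : v ≥ 0, 𝟙ᵀv = 1, v ≤ (k/n)𝟙 − γ_Pᵀ𝟙}`. -/
def fhat {m n : ℕ} (k : ℕ) (S : Fin m → Fin n → ℝ)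
    (γP : Fin m → Fin n → ℝ) (j : Fin m) : ℝ :=
  sSup {x : ℝ | ∃ v : Fin n → ℝ, (∀ i, 0 ≤ v i) ∧ (∑ i, v i = 1) ∧
    (∀ i, v i ≤ (k : ℝ) / (n : ℝ) - ∑ l, γP l i) ∧ x = ∑ i, S j i * v i}

/-!
Adding an item `x` to `P` can reuse an optimal coupling for `P` and route the new row through
the unused column capacity, so the true marginal gain of `x` is at least `f̂(x ∣ P)`, which is at
least `α_{x,min}`. Conversely, deleting the rows of `O \ P` from an optimal coupling for `O` costs
at most the sum of their `α_{j,max}`, and `f` is monotone on sets of size at most `k`, so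
`f(O) - f(P) ≤ ∑_{j ∈ O \ P} α_{j,max}`. A greedy step therefore gains at least the fraction `α / k`
of the gap to the optimum, and `k` such steps shrink the gap by `(1 - α / k) ^ k ≤ e^{-α}`.

Comparing a row's value with `α_{j,min}` and `α_{j,max}` uses the bathtub principle: among weights
in `[0, 1]` of total mass `t`, the indicator of the `t` largest entries maximises the weighted sum.
-/

section Bathtub

variable {ι R : Type*}

lemma exists_card_eq_forall_notMem_le [Fintype ι] [LinearOrder R] (s : ι → R) {t : ℕ}
    (ht : t ≤ Fintype.card ι) :
    ∃ T : Finset ι, #T = t ∧ ∀ i ∈ T, ∀ j ∉ T, s j ≤ s i := by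
  classical
  induction t with
  | zero => exact ⟨∅, card_empty, by simp⟩
  | succ t ih =>
    obtain ⟨T, hTcard, hT⟩ := ih (by omega)
    have hTc : Tᶜ.Nonempty := by
      rw [← card_pos, card_compl]
      omega
    obtain ⟨x, hx, hxmax⟩ := exists_max_image Tᶜ s hTc
    refine ⟨insert x T, by rw [card_insert_of_notMem (mem_compl.1 hx), hTcard], ?_⟩
    intro i hi j hj
    rw [mem_insert, not_or] at hj
    obtain rfl | hi := mem_insert.1 hi
    · exact hxmax j (mem_compl.2 hj.2)
    · exact hT i hi j hj.2

lemma exists_threshold_of_forall_notMem_le [Finite ι] [LinearOrder R] [Nonempty R] {s : ι → R}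
    {T : Finset ι} (hT : ∀ i ∈ T, ∀ j ∉ T, s j ≤ s i) :
    ∃ θ, (∀ i ∈ T, θ ≤ s i) ∧ ∀ j ∉ T, s j ≤ θ := by
  obtain rfl | hTne := T.eq_empty_or_nonempty
  · obtain ⟨θ, hθ⟩ := (Set.finite_range s).bddAbove
    exact ⟨θ, by simp, fun j _ => hθ ⟨j, rfl⟩⟩
  · obtain ⟨i, hi, himin⟩ := exists_min_image T s hTne
    exact ⟨s i, himin, hT i hi⟩

lemma sum_mul_le_sum_of_forall_notMem_le [Fintype ι] [CommRing R] [LinearOrder R]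
    [IsStrictOrderedRing R] {s w : ι → R} {T : Finset ι} (hT : ∀ i ∈ T, ∀ j ∉ T, s j ≤ s i)
    (hw0 : ∀ i, 0 ≤ w i) (hw1 : ∀ i, w i ≤ 1) (hw : ∑ i, w i = #T) :
    ∑ i, s i * w i ≤ ∑ i ∈ T, s i := by
  classical
  obtain ⟨θ, hθ_le, hle_θ⟩ := exists_threshold_of_forall_notMem_le hT
  have hpointwise : ∀ i, (s i - θ) * w i ≤ if i ∈ T then s i - θ else 0 := by
    intro i
    split_ifs with hi
    · exact mul_le_of_le_one_right (sub_nonneg.2 (hθ_le i hi)) (hw1 i)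
    · exact mul_nonpos_of_nonpos_of_nonneg (sub_nonpos.2 (hle_θ i hi)) (hw0 i)
  have hshifted : ∑ i, (s i - θ) * w i ≤ ∑ i ∈ T, (s i - θ) := by
    simpa only [sum_ite_mem, univ_inter] using sum_le_sum fun i (_ : i ∈ univ) => hpointwise i
  simp only [sub_mul, sum_sub_distrib, ← mul_sum, hw, sum_const, nsmul_eq_mul] at hshifted
  linarith [mul_comm θ (#T : R)]

end Bathtub

section TopSum

variable {n t : ℕ} {s w : Fin n → ℝ}

lemma finite_setOf_sum_of_card_eq (t : ℕ) (s : Fin n → ℝ) :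
    {x : ℝ | ∃ T : Finset (Fin n), #T = t ∧ x = ∑ i ∈ T, s i}.Finite := by
  refine (Set.finite_range fun T : Finset (Fin n) => ∑ i ∈ T, s i).subset ?_
  rintro _ ⟨T, -, rfl⟩
  exact ⟨T, rfl⟩

lemma sum_mul_le_topSum (hw0 : ∀ i, 0 ≤ w i) (hw1 : ∀ i, w i ≤ 1) (hw : ∑ i, w i = t) :
    ∑ i, s i * w i ≤ topSum t s := by
  have ht : (t : ℝ) ≤ Fintype.card (Fin n) := by
    simpa [← hw] using sum_le_sum fun i (_ : i ∈ univ) => hw1 i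
  obtain ⟨T, rfl, hT⟩ := exists_card_eq_forall_notMem_le s (Nat.cast_le.1 ht)
  exact (sum_mul_le_sum_of_forall_notMem_le hT hw0 hw1 hw).trans
    (le_csSup (finite_setOf_sum_of_card_eq _ s).bddAbove ⟨T, rfl, rfl⟩)

lemma topSum_neg (t : ℕ) (s : Fin n → ℝ) : topSum t (-s) = -botSum t s := by
  rw [topSum, botSum, ← Real.sSup_neg]
  congr 1
  ext x
  simp [neg_eq_iff_eq_neg]

lemma botSum_nonneg (hs : ∀ i, 0 ≤ s i) : 0 ≤ botSum t s := by
  apply Real.sInf_nonneg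
  rintro _ ⟨T, -, rfl⟩
  exact sum_nonneg fun i _ => hs i

end TopSum

section CappedSimplex

variable {ι : Type*} [Fintype ι]

/-- The probability vectors bounded entrywise by `c`: the rows that a coupling may have when the
columns have capacities `c`. -/
def cappedSimplex (c : ι → ℝ) : Set (ι → ℝ) := stdSimplex ℝ ι ∩ Set.Iic c

lemma cappedSimplex_mono : Monotone (cappedSimplex : (ι → ℝ) → Set (ι → ℝ)) :=
  fun _ _ h => Set.inter_subset_inter_right _ (Set.Iic_subset_Iic.2 h)

lemma cappedSimplex_nonempty {c : ι → ℝ} (hc0 : 0 ≤ c) (hc1 : 1 ≤ ∑ i, c i) :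
    (cappedSimplex c).Nonempty := by
  refine ⟨fun i => c i / ∑ i, c i, ⟨fun i => div_nonneg (hc0 i) (by linarith), ?_⟩,
    fun i => div_le_self (hc0 i) hc1⟩
  rw [← sum_div]
  exact div_self (by linarith)

end CappedSimplex

section RowValue

open scoped Matrix

/-- The capacities `(k/n)𝟙` of the columns in the definitions of `fval` and `fhat`. -/
abbrev uniformCap (n k : ℕ) : Fin n → ℝ := fun _ => (k : ℝ) / n

variable {m n k : ℕ}

lemma uniformCap_nonneg : 0 ≤ uniformCap n k := fun _ => by positivity

lemma sum_uniformCap (hn : n ≠ 0) : ∑ j, uniformCap n k j = k := by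
  simp only [sum_const, card_univ, Fintype.card_fin, nsmul_eq_mul]
  field_simp

lemma alphaMax_neg (S : Fin m → Fin n → ℝ) (j : Fin m) :
    alphaMax k (-S) j = -alphaMin k S j := by
  rw [alphaMax, alphaMin, Pi.neg_apply, topSum_neg, mul_neg]

lemma alphaMin_nonneg {S : Fin m → Fin n → ℝ} {j : Fin m} (hS : ∀ i, 0 ≤ S j i) :
    0 ≤ alphaMin k S j :=
  mul_nonneg (by positivity) (botSum_nonneg hS)

lemma dotProduct_le_alphaMax (hk : 0 < k) (hkn : k ≤ n) (S : Fin m → Fin n → ℝ) (j : Fin m)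
    {v : Fin n → ℝ} (hv : v ∈ cappedSimplex (uniformCap n k)) : S j ⬝ᵥ v ≤ alphaMax k S j := by
  obtain ⟨⟨hv0, hv1⟩, hvcap⟩ := hv
  set t : ℕ := n / k with ht
  have htpos : (0 : ℝ) < t := Nat.cast_pos.2 (Nat.div_pos hkn hk)
  have hweight_le_one : ∀ i, t * v i ≤ 1 := fun i => calc
    t * v i ≤ t * (k / n) := mul_le_mul_of_nonneg_left (hvcap i) htpos.le
    _ = (t * k : ℕ) / n := by push_cast; ring
    _ ≤ 1 := div_le_one_of_le₀ (Nat.cast_le.2 (Nat.div_mul_le_self n k)) n.cast_nonneg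
  have hbathtub : ∑ i, S j i * (t * v i) ≤ topSum t (S j) :=
    sum_mul_le_topSum (fun i => mul_nonneg htpos.le (hv0 i)) hweight_le_one
      (by rw [← mul_sum, hv1, mul_one])
  rw [alphaMax, ← ht, one_div, ← div_eq_inv_mul, le_div_iff₀' htpos, dotProduct, mul_sum]
  simpa only [mul_left_comm] using hbathtub

lemma alphaMin_le_dotProduct (hk : 0 < k) (hkn : k ≤ n) (S : Fin m → Fin n → ℝ) (j : Fin m)
    {v : Fin n → ℝ} (hv : v ∈ cappedSimplex (uniformCap n k)) : alphaMin k S j ≤ S j ⬝ᵥ v := by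
  have hneg := dotProduct_le_alphaMax hk hkn (-S) j hv
  rwa [alphaMax_neg, Pi.neg_apply, neg_dotProduct, neg_le_neg_iff] at hneg

lemma alphaMin_le_alphaMax (hk : 0 < k) (hkn : k ≤ n) (S : Fin m → Fin n → ℝ) (j : Fin m) :
    alphaMin k S j ≤ alphaMax k S j := by
  have hcap : 1 ≤ ∑ i, uniformCap n k i := by
    rw [sum_uniformCap (by omega)]
    exact Nat.one_le_cast.2 hk
  obtain ⟨v, hv⟩ := cappedSimplex_nonempty uniformCap_nonneg hcap
  exact (alphaMin_le_dotProduct hk hkn S j hv).trans (dotProduct_le_alphaMax hk hkn S j hv)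

end RowValue

section Coupling

open scoped Matrix

variable {m n : ℕ} {μ : Fin m → ℝ} {ν : Fin n → ℝ} {γ : Fin m → Fin n → ℝ}
  {P : Finset (Fin m)} {x : Fin m}

lemma sum_indVec (P : Finset (Fin m)) : ∑ i, indVec P i = #P := by simp [indVec]

lemma indVec_insert (hx : x ∉ P) : indVec (insert x P) = indVec P + Pi.single x 1 := by
  ext i
  by_cases hi : i = x
  · subst hi
    simp [indVec, hx]
  · simp [indVec, hi]

lemma dotS_add_single (S γ : Fin m → Fin n → ℝ) (x : Fin m) (v : Fin n → ℝ) :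
    dotS S (γ + Pi.single x v) = dotS S γ + S x ⬝ᵥ v := by
  have hrow : ∀ i, S i ⬝ᵥ (Pi.single x v : Fin m → Fin n → ℝ) i =
      if i = x then S x ⬝ᵥ v else 0 := by
    intro i
    by_cases hi : i = x
    · subst hi
      simp
    · simp [hi]
  change ∑ i, S i ⬝ᵥ (γ i + (Pi.single x v : Fin m → Fin n → ℝ) i) = ∑ i, S i ⬝ᵥ γ i + _
  simp only [dotProduct_add, sum_add_distrib, hrow, sum_ite_eq', mem_univ, if_true]

lemma le_of_mem_GammaLe (hγ : γ ∈ GammaLe μ ν) (i : Fin m) : γ i ≤ ν := fun j =>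
  (single_le_sum (f := fun i => γ i j) (fun i _ => hγ.1 i j) (mem_univ i)).trans (hγ.2.2 j)

lemma row_mem_cappedSimplex (hγ : γ ∈ GammaLe (indVec P) ν) (hx : x ∈ P) :
    γ x ∈ cappedSimplex ν :=
  ⟨⟨hγ.1 x, by simp [hγ.2.1 x, indVec, hx]⟩, le_of_mem_GammaLe hγ x⟩

lemma row_eq_zero (hγ : γ ∈ GammaLe (indVec P) ν) (hx : x ∉ P) : γ x = 0 := by
  have hsum : ∑ j, γ x j = 0 := by simp [hγ.2.1 x, indVec, hx]
  exact (Fintype.sum_eq_zero_iff_of_nonneg (hγ.1 x)).1 hsum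

lemma dotS_eq_sum_of_mem_GammaLe (S : Fin m → Fin n → ℝ) (hγ : γ ∈ GammaLe (indVec P) ν) :
    dotS S γ = ∑ i ∈ P, S i ⬝ᵥ γ i :=
  (sum_subset (subset_univ P) fun i _ hi => by
    change S i ⬝ᵥ γ i = 0
    rw [row_eq_zero hγ hi, dotProduct_zero]).symm

lemma piecewise_mem_GammaLe (hγ : γ ∈ GammaLe (indVec P) ν) (Q : Finset (Fin m)) :
    Q.piecewise γ 0 ∈ GammaLe (indVec (P ∩ Q)) ν := by
  have hγ0 : 0 ≤ γ := hγ.1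
  have hle : Q.piecewise γ 0 ≤ γ := piecewise_le_of_le_of_le _ le_rfl hγ0
  have hnonneg : 0 ≤ Q.piecewise γ 0 := le_piecewise_of_le_of_le Q hγ0 le_rfl
  refine ⟨hnonneg, fun i => ?_, fun j =>
    (sum_le_sum fun i _ => hle i j).trans (hγ.2.2 j)⟩
  by_cases hi : i ∈ Q
  · simp [hi, hγ.2.1 i, indVec]
  · simp [hi, indVec]

lemma product_mem_GammaLe (hn : n ≠ 0) (hμ : 0 ≤ μ) {c : ℝ} (hc : ∑ i, μ i ≤ c) :
    (fun i _ => μ i / n) ∈ GammaLe (n := n) μ fun _ => c / n := by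
  refine ⟨fun i _ => div_nonneg (hμ i) n.cast_nonneg, fun i => ?_, fun _ => ?_⟩
  · simp only [sum_const, card_univ, Fintype.card_fin, nsmul_eq_mul]
    field_simp
  · rw [← sum_div]
    exact div_le_div_of_nonneg_right hc n.cast_nonneg

lemma bddAbove_dotS_image_GammaLe (S : Fin m → Fin n → ℝ) (μ : Fin m → ℝ) (ν : Fin n → ℝ) :
    BddAbove (dotS S '' GammaLe μ ν) := by
  refine ⟨∑ i, ∑ j, |S i j| * ν j, ?_⟩
  rintro _ ⟨γ, hγ, rfl⟩
  exact sum_le_sum fun i _ => sum_le_sum fun j _ => mul_le_mul (le_abs_self _)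
    (le_of_mem_GammaLe hγ i j) (hγ.1 i j) (abs_nonneg _)

/-- The column capacity left over by the coupling `γ` when the capacities are `ν`. -/
def residualCap (ν : Fin n → ℝ) (γ : Fin m → Fin n → ℝ) : Fin n → ℝ := fun j => ν j - ∑ i, γ i j

lemma residualCap_nonneg (hγ : γ ∈ GammaLe μ ν) : 0 ≤ residualCap ν γ :=
  fun j => sub_nonneg.2 (hγ.2.2 j)

lemma residualCap_le (hγ : γ ∈ GammaLe μ ν) : residualCap ν γ ≤ ν :=
  fun j => sub_le_self _ (sum_nonneg fun i _ => hγ.1 i j)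

lemma sum_residualCap (hγ : γ ∈ GammaLe μ ν) : ∑ j, residualCap ν γ j = ∑ j, ν j - ∑ i, μ i := by
  simp only [residualCap, sum_sub_distrib]
  rw [sum_comm, sum_congr rfl fun i _ => hγ.2.1 i]

lemma add_single_mem_GammaLe (hγ : γ ∈ GammaLe μ ν) (x : Fin m) {v : Fin n → ℝ}
    (hv : v ∈ cappedSimplex (residualCap ν γ)) :
    γ + Pi.single x v ∈ GammaLe (μ + Pi.single x 1) ν := by
  obtain ⟨⟨hv0, hv1⟩, hvcap⟩ := hv
  refine ⟨add_nonneg (a := γ) hγ.1 (Pi.single_nonneg.2 hv0), fun i => ?_, fun j => ?_⟩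
  · simp only [Pi.add_apply, sum_add_distrib, hγ.2.1 i, add_right_inj]
    by_cases hi : i = x
    · subst hi
      simp [hv1]
    · simp [hi]
  · have hcol : ∑ i, (Pi.single x v : Fin m → Fin n → ℝ) i j = v j := by
      rw [← Finset.sum_apply, sum_pi_single', if_pos (mem_univ x)]
    simp only [Pi.add_apply, sum_add_distrib, hcol]
    exact le_sub_iff_add_le'.1 (hvcap j)

lemma fval_eq_hval (hn : n ≠ 0) (S : Fin m → Fin n → ℝ) (P : Finset (Fin m)) :
    fval #P S P = hval S P := by
  suffices GammaLe (indVec P) (uniformCap n #P) = Gamma (indVec P) (uniformCap n #P) by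
    rw [fval, hval, this]
  ext γ
  refine ⟨fun hγ => ⟨hγ.1, hγ.2.1, fun j => ?_⟩, fun hγ => ⟨hγ.1, hγ.2.1, fun j => (hγ.2.2 j).le⟩⟩
  have hsum : ∑ j, residualCap (uniformCap n #P) γ j = 0 := by
    rw [sum_residualCap hγ, sum_uniformCap hn, sum_indVec, sub_self]
  have hzero := (Fintype.sum_eq_zero_iff_of_nonneg (residualCap_nonneg hγ)).1 hsum
  exact (sub_eq_zero.1 (congrFun hzero j)).symm

end Coupling

section Gain

open scoped Matrix

variable {m n k : ℕ} {S γ : Fin m → Fin n → ℝ} {O P Q : Finset (Fin m)} {x : Fin m}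

lemma dotS_le_fval (S : Fin m → Fin n → ℝ) (hγ : γ ∈ GammaLe (indVec P) (uniformCap n k)) :
    dotS S γ ≤ fval k S P :=
  le_csSup (bddAbove_dotS_image_GammaLe S _ _) ⟨γ, hγ, rfl⟩

lemma fval_le (hn : n ≠ 0) (hP : #P ≤ k) {c : ℝ}
    (h : ∀ γ ∈ GammaLe (indVec P) (uniformCap n k), dotS S γ ≤ c) : fval k S P ≤ c := by
  have hmass : ∑ i, indVec P i ≤ k := by
    rw [sum_indVec]
    exact Nat.cast_le.2 hP
  have hindVec : 0 ≤ indVec P := fun i => by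
    unfold indVec
    split_ifs <;> simp
  refine csSup_le (Set.Nonempty.image _ ⟨_, product_mem_GammaLe hn hindVec hmass⟩) ?_
  rintro _ ⟨γ, hγ, rfl⟩
  exact h γ hγ

lemma fval_empty (hn : n ≠ 0) (S : Fin m → Fin n → ℝ) : fval k S ∅ = 0 := by
  have hdotS : ∀ γ ∈ GammaLe (indVec ∅) (uniformCap n k), dotS S γ = 0 := fun γ hγ => by
    rw [dotS_eq_sum_of_mem_GammaLe S hγ, sum_empty]
  have hzero : (0 : Fin m → Fin n → ℝ) ∈ GammaLe (indVec ∅) (uniformCap n k) :=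
    ⟨by simp, by simp [indVec], fun j => by simpa using uniformCap_nonneg j⟩
  exact le_antisymm (fval_le hn (by simp) fun γ hγ => (hdotS γ hγ).le)
    ((hdotS 0 hzero).ge.trans (dotS_le_fval S hzero))

lemma dotS_add_dotProduct_le_fval_insert (S : Fin m → Fin n → ℝ)
    (hγ : γ ∈ GammaLe (indVec P) (uniformCap n k)) (hx : x ∉ P) {v : Fin n → ℝ}
    (hv : v ∈ cappedSimplex (residualCap (uniformCap n k) γ)) :
    dotS S γ + S x ⬝ᵥ v ≤ fval k S (insert x P) := by
  rw [← dotS_add_single]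
  refine dotS_le_fval S ?_
  rw [indVec_insert hx]
  exact add_single_mem_GammaLe hγ x hv

lemma cappedSimplex_residualCap_nonempty (hn : n ≠ 0) (hP : #P < k)
    (hγ : γ ∈ GammaLe (indVec P) (uniformCap n k)) :
    (cappedSimplex (residualCap (uniformCap n k) γ)).Nonempty := by
  refine cappedSimplex_nonempty (residualCap_nonneg hγ) ?_
  rw [sum_residualCap hγ, sum_uniformCap hn, sum_indVec, le_sub_iff_add_le']
  exact_mod_cast hP

lemma fval_le_fval_insert (hk : 0 < k) (hkn : k ≤ n) (hmin : 0 ≤ alphaMin k S x)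
    (hP : #P < k) (hx : x ∉ P) : fval k S P ≤ fval k S (insert x P) := by
  refine fval_le (by omega) hP.le fun γ hγ => ?_
  obtain ⟨v, hv⟩ := cappedSimplex_residualCap_nonempty (by omega) hP hγ
  have hgain : 0 ≤ S x ⬝ᵥ v :=
    hmin.trans (alphaMin_le_dotProduct hk hkn S x (cappedSimplex_mono (residualCap_le hγ) hv))
  linarith [dotS_add_dotProduct_le_fval_insert S hγ hx hv]

lemma fval_mono (hk : 0 < k) (hkn : k ≤ n) (hmin : ∀ j, 0 ≤ alphaMin k S j) (hQP : Q ⊆ P)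
    (hP : #P ≤ k) : fval k S Q ≤ fval k S P := by
  induction P using Finset.strongInduction with
  | H P ih =>
    obtain rfl | hQP := hQP.eq_or_ssubset
    · exact le_rfl
    obtain ⟨x, hxP, hxQ⟩ := exists_of_ssubset hQP
    have hcard : #(P.erase x) < k := (card_erase_lt_of_mem hxP).trans_le hP
    calc fval k S Q ≤ fval k S (P.erase x) :=
          ih _ (erase_ssubset hxP) (subset_erase.2 ⟨hQP.subset, hxQ⟩) hcard.le
      _ ≤ fval k S (insert x (P.erase x)) :=
          fval_le_fval_insert hk hkn (hmin x) hcard (notMem_erase x P)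
      _ = fval k S P := by rw [insert_erase hxP]

lemma fval_le_fval_inter_add_sum_alphaMax (hk : 0 < k) (hkn : k ≤ n) (S : Fin m → Fin n → ℝ)
    (hO : #O ≤ k) (P : Finset (Fin m)) :
    fval k S O ≤ fval k S (O ∩ P) + ∑ j ∈ O \ P, alphaMax k S j := by
  refine fval_le (by omega) hO fun γ hγ => ?_
  have hrestrict := piecewise_mem_GammaLe hγ P
  have hkept : ∑ i ∈ O ∩ P, S i ⬝ᵥ γ i = dotS S (P.piecewise γ 0) := by
    rw [dotS_eq_sum_of_mem_GammaLe S hrestrict]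
    exact sum_congr rfl fun i hi => by rw [piecewise_eq_of_mem P γ 0 (mem_inter.1 hi).2]
  rw [dotS_eq_sum_of_mem_GammaLe S hγ, ← sum_inter_add_sum_sdiff O P, hkept]
  exact add_le_add (dotS_le_fval S hrestrict) <| sum_le_sum fun j hj =>
    dotProduct_le_alphaMax hk hkn S j (row_mem_cappedSimplex hγ (mem_sdiff.1 hj).1)

lemma fval_sub_fval_le_sum_alphaMax (hk : 0 < k) (hkn : k ≤ n) (hmin : ∀ j, 0 ≤ alphaMin k S j)
    (hO : #O ≤ k) (hP : #P ≤ k) :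
    fval k S O - fval k S P ≤ ∑ j ∈ O \ P, alphaMax k S j := by
  have hdrop := fval_le_fval_inter_add_sum_alphaMax hk hkn S hO P
  have hmono := fval_mono hk hkn hmin (inter_subset_right : O ∩ P ⊆ P) hP
  linarith

lemma fhat_eq_sSup_image (S γ : Fin m → Fin n → ℝ) (x : Fin m) :
    fhat k S γ x = sSup ((S x ⬝ᵥ ·) '' cappedSimplex (residualCap (uniformCap n k) γ)) := by
  unfold fhat
  congr 1
  ext y
  constructor
  · rintro ⟨v, hv0, hv1, hvcap, rfl⟩
    exact ⟨v, ⟨⟨hv0, hv1⟩, hvcap⟩, rfl⟩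
  · rintro ⟨v, ⟨⟨hv0, hv1⟩, hvcap⟩, rfl⟩
    exact ⟨v, hv0, hv1, hvcap, rfl⟩

lemma fhat_le_fval_insert_sub_dotS (hn : n ≠ 0) (S : Fin m → Fin n → ℝ) (hP : #P < k)
    (hγ : γ ∈ GammaLe (indVec P) (uniformCap n k)) (hx : x ∉ P) :
    fhat k S γ x ≤ fval k S (insert x P) - dotS S γ := by
  rw [fhat_eq_sSup_image]
  refine csSup_le ((cappedSimplex_residualCap_nonempty hn hP hγ).image _) ?_
  rintro _ ⟨v, hv, rfl⟩
  exact le_sub_iff_add_le'.2 (dotS_add_dotProduct_le_fval_insert S hγ hx hv)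

lemma alphaMin_le_fhat (hk : 0 < k) (hkn : k ≤ n) (S : Fin m → Fin n → ℝ) (hP : #P < k)
    (hγ : γ ∈ GammaLe (indVec P) (uniformCap n k)) (x : Fin m) :
    alphaMin k S x ≤ fhat k S γ x := by
  have hsub := cappedSimplex_mono (residualCap_le hγ)
  obtain ⟨v, hv⟩ := cappedSimplex_residualCap_nonempty (by omega) hP hγ
  rw [fhat_eq_sSup_image]
  refine (alphaMin_le_dotProduct hk hkn S x (hsub hv)).trans (le_csSup ⟨alphaMax k S x, ?_⟩
    ⟨v, hv, rfl⟩)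
  rintro _ ⟨w, hw, rfl⟩
  exact dotProduct_le_alphaMax hk hkn S x (hsub hw)

end Gain

section Greedy

variable {m n k : ℕ} {S γ : Fin m → Fin n → ℝ} {O P : Finset (Fin m)} {x : Fin m} {α : ℝ}

/-- One step of the greedy algorithm: `γ` is a coupling attaining `f(P)`, and `x` maximises the
approximate marginal gain computed from `γ` over the complement of `P`. -/
structure IsGreedyStep (k : ℕ) (S γ : Fin m → Fin n → ℝ) (P : Finset (Fin m)) (x : Fin m) :
    Prop where
  mem_GammaLe : γ ∈ GammaLe (indVec P) (uniformCap n k)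
  dotS_eq_fval : dotS S γ = fval k S P
  notMem : x ∉ P
  fhat_le : ∀ y ∉ P, fhat k S γ y ≤ fhat k S γ x

lemma IsGreedyStep.mul_sub_le (h : IsGreedyStep k S γ P x) (hk : 0 < k) (hkn : k ≤ n)
    (hα0 : 0 ≤ α) (hα : ∀ j, α * alphaMax k S j ≤ alphaMin k S j)
    (hmin : ∀ j, 0 ≤ alphaMin k S j) (hO : #O ≤ k) (hP : #P < k) :
    α * (fval k S O - fval k S P) ≤ k * (fval k S (insert x P) - fval k S P) := by
  have hαMin_le : ∀ j, alphaMin k S j ≤ fhat k S γ j := alphaMin_le_fhat hk hkn S hP h.mem_GammaLe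
  have hfhat_nonneg : 0 ≤ fhat k S γ x := (hmin x).trans (hαMin_le x)
  have hcard : (#(O \ P) : ℝ) ≤ k := Nat.cast_le.2 ((card_le_card sdiff_subset).trans hO)
  calc α * (fval k S O - fval k S P)
      ≤ α * ∑ j ∈ O \ P, alphaMax k S j :=
        mul_le_mul_of_nonneg_left (fval_sub_fval_le_sum_alphaMax hk hkn hmin hO hP.le) hα0
    _ = ∑ j ∈ O \ P, α * alphaMax k S j := mul_sum _ _ _
    _ ≤ ∑ _j ∈ O \ P, fhat k S γ x := sum_le_sum fun j hj =>
        (hα j).trans ((hαMin_le j).trans (h.fhat_le j (mem_sdiff.1 hj).2))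
    _ = #(O \ P) * fhat k S γ x := by rw [sum_const, nsmul_eq_mul]
    _ ≤ k * fhat k S γ x := mul_le_mul_of_nonneg_right hcard hfhat_nonneg
    _ ≤ k * (fval k S (insert x P) - fval k S P) := by
        rw [← h.dotS_eq_fval]
        exact mul_le_mul_of_nonneg_left
          (fhat_le_fval_insert_sub_dotS (by omega) S hP h.mem_GammaLe h.notMem) k.cast_nonneg

lemma one_sub_exp_neg_mul_le_of_forall_mul_sub_le {a : ℕ → ℝ} {b : ℝ} (hk : 0 < k) (hαk : α ≤ k)
    (ha0 : 0 ≤ a 0) (hb : 0 ≤ b) (h : ∀ i < k, α * (b - a i) ≤ k * (a (i + 1) - a i)) :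
    (1 - Real.exp (-α)) * b ≤ a k := by
  have hk' : (0 : ℝ) < k := Nat.cast_pos.2 hk
  have hratio : 0 ≤ 1 - α / k := sub_nonneg.2 ((div_le_one hk').2 hαk)
  have hcontract : ∀ i < k, b - a (i + 1) ≤ (1 - α / k) * (b - a i) := by
    intro i hi
    have hstep : α / k * (b - a i) ≤ a (i + 1) - a i := by
      rw [div_mul_eq_mul_div, div_le_iff₀' hk']
      exact h i hi
    linarith
  have hgap : b - a k ≤ Real.exp (-α) * b := calc
    b - a k ≤ (1 - α / k) ^ k * (b - a 0) := le_geom (u := fun i => b - a i) hratio k hcontract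
    _ ≤ (1 - α / k) ^ k * b := mul_le_mul_of_nonneg_left (by linarith) (pow_nonneg hratio k)
    _ ≤ Real.exp (-α) * b :=
        mul_le_mul_of_nonneg_right (Real.one_sub_div_pow_le_exp_neg hαk) hb
  linarith

lemma card_eq_of_insert_seq {ι : Type*} [DecidableEq ι] {Pseq : ℕ → Finset ι} {xseq : ℕ → ι}
    (hP0 : Pseq 0 = ∅) (hnotMem : ∀ i < k, xseq i ∉ Pseq i)
    (hstep : ∀ i < k, Pseq (i + 1) = insert (xseq i) (Pseq i)) :
    ∀ i ≤ k, #(Pseq i) = i := by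
  intro i hi
  induction i with
  | zero => rw [hP0, card_empty]
  | succ i ih => rw [hstep i hi, card_insert_of_notMem (hnotMem i hi), ih (by omega)]

lemma exists_sSup_eq_fval (k : ℕ) (S : Fin m → Fin n → ℝ) :
    ∃ O : Finset (Fin m), #O ≤ k ∧
      sSup {x : ℝ | ∃ P : Finset (Fin m), #P ≤ k ∧ x = fval k S P} = fval k S O := by
  have hnonempty : {x : ℝ | ∃ P : Finset (Fin m), #P ≤ k ∧ x = fval k S P}.Nonempty :=
    ⟨_, ∅, by simp, rfl⟩
  refine hnonempty.csSup_mem ((Set.finite_range (fval k S)).subset ?_)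
  rintro _ ⟨P, -, rfl⟩
  exact ⟨P, rfl⟩

theorem stmt_19_general (hk : 0 < k) (hkn : k ≤ n)
    (hαpos : ∀ j, 0 < alphaMax k S j) (hα0 : 0 ≤ α)
    (hα : ∀ j, α ≤ alphaMin k S j / alphaMax k S j)
    {Pseq : ℕ → Finset (Fin m)} {γseq : ℕ → Fin m → Fin n → ℝ} {xseq : ℕ → Fin m}
    (hP0 : Pseq 0 = ∅) (hgreedy : ∀ i < k, IsGreedyStep k S (γseq i) (Pseq i) (xseq i))
    (hstep : ∀ i < k, Pseq (i + 1) = insert (xseq i) (Pseq i)) :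
    #(Pseq k) = k ∧
    fval k S (Pseq k) = hval S (Pseq k) ∧
    (1 - Real.exp (-α)) * sSup {x : ℝ | ∃ P : Finset (Fin m), #P ≤ k ∧ x = fval k S P} ≤
      fval k S (Pseq k) := by
  have hn : n ≠ 0 := by omega
  have hcard := card_eq_of_insert_seq hP0 (fun i hi => (hgreedy i hi).notMem) hstep
  have hα_mul : ∀ j, α * alphaMax k S j ≤ alphaMin k S j := fun j =>
    (le_div_iff₀ (hαpos j)).1 (hα j)
  have hmin : ∀ j, 0 ≤ alphaMin k S j := fun j =>
    (mul_nonneg hα0 (hαpos j).le).trans (hα_mul j)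
  have hα1 : α ≤ 1 := (hα (xseq 0)).trans
    (div_le_one_of_le₀ (alphaMin_le_alphaMax hk hkn S _) (hαpos _).le)
  refine ⟨hcard k le_rfl, ?_, ?_⟩
  · simpa only [hcard k le_rfl] using fval_eq_hval hn S (Pseq k)
  · obtain ⟨O, hO, hsSup⟩ := exists_sSup_eq_fval k S
    have hO_nonneg : 0 ≤ fval k S O :=
      (fval_empty hn S).ge.trans (fval_mono hk hkn hmin (empty_subset O) hO)
    rw [hsSup]
    refine one_sub_exp_neg_mul_le_of_forall_mul_sub_le (a := fun i => fval k S (Pseq i)) hk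
      (hα1.trans (Nat.one_le_cast.2 hk)) (by rw [hP0, fval_empty hn S]) hO_nonneg fun i hi => ?_
    rw [hstep i hi]
    exact (hgreedy i hi).mul_sub_le hk hkn hα0 hα_mul hmin hO (by rwa [hcard i hi.le])

end Greedy

/-- approximation guarantee of greedy with approximate marginal
gains: with `α = min_j α_{j,min}/α_{j,max}`, the greedy set `P̂ = P_k` built by
iteratively adding a maximizer of the approximate marginal gain satisfies
`|P̂| = k` and `f(P̂) = h(P̂) ≥ (1 − e^{−α})·max{f(P) : |P| ≤ k}`. -/
theorem stmt_19 (m n k : ℕ) (hm : 0 < m) (hn : 0 < n) (hk : 0 < k)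
    (hkm : k ≤ m) (hkn : k ≤ n)
    (S : Fin m → Fin n → ℝ) (hS : ∀ i j, 0 ≤ S i j)
    (hαpos : ∀ j : Fin m, 0 < alphaMax k S j)
    (α : ℝ)
    (hα : IsLeast {x : ℝ | ∃ j : Fin m, x = alphaMin k S j / alphaMax k S j} α)
    (Pseq : ℕ → Finset (Fin m)) (γseq : ℕ → (Fin m → Fin n → ℝ))
    (xseq : ℕ → Fin m)
    (hP0 : Pseq 0 = ∅)
    (hγopt : ∀ i < k,
      γseq i ∈ GammaLe (indVec (Pseq i)) (fun _ => (k : ℝ) / (n : ℝ)) ∧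
      dotS S (γseq i) = fval k S (Pseq i))
    (hxnotmem : ∀ i < k, xseq i ∉ Pseq i)
    (hxmax : ∀ i < k, ∀ x : Fin m, x ∉ Pseq i →
      fhat k S (γseq i) x ≤ fhat k S (γseq i) (xseq i))
    (hstep : ∀ i < k, Pseq (i + 1) = insert (xseq i) (Pseq i)) :
    (Pseq k).card = k ∧
    fval k S (Pseq k) = hval S (Pseq k) ∧
    (1 - Real.exp (-α)) *
        sSup {x : ℝ | ∃ P : Finset (Fin m), P.card ≤ k ∧ x = fval k S P} ≤
      fval k S (Pseq k) := by
  obtain ⟨j, hj⟩ := hα.1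
  have hα0 : 0 ≤ α := hj ▸ div_nonneg (alphaMin_nonneg (hS j)) (hαpos j).le
  exact stmt_19_general hk hkn hαpos hα0 (fun i => hα.2 ⟨i, rfl⟩) hP0
    (fun i hi => ⟨(hγopt i hi).1, (hγopt i hi).2, hxnotmem i hi, hxmax i hi⟩) hstep
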